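/- Let (Ω, 𝒜, μ) be a measure space, p ∈ [1,∞), and T a positive C₀-semigroup on L_p(μ) with generator A, and let V : Ω → [0,∞] be T-admissible. Then for all ε ∈ (0,1], all n ∈ ℕ, and all t ≥ 0, one has T_{εV}(t) ≥ e^{−εnt} T_{V − V∧n}(t) in the operator order, and consequently T_{0,V} ≥ (T_V)_{−V}, i.e., T_{0,V}(t)f ≥ (T_V)_{−V}(t)f for all t ≥ 0 and all f ∈ L_p(μ) with f ≥ 0. -/

import Mathlib

open MeasureTheory Filter Topology ENNReal

noncomputable section

namespace Absorption

variable {E : Type*} [NormedAddCommGroup E] [NormedSpace ℝ E]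

/-- A one-parameter semigroup of bounded operators (for nonnegative times). -/
def IsSemigroup (T : ℝ → E →L[ℝ] E) : Prop :=
  T 0 = ContinuousLinearMap.id ℝ E ∧
    ∀ s t : ℝ, 0 ≤ s → 0 ≤ t → T (s + t) = (T s).comp (T t)

/-- A `C₀`-semigroup: a one-parameter semigroup which is strongly continuous on `[0, ∞)`. -/
def IsC0Semigroup (T : ℝ → E →L[ℝ] E) : Prop :=
  IsSemigroup T ∧ ∀ f : E, ContinuousOn (fun t => T t f) (Set.Ici (0 : ℝ))

/-- `(f, g)` belongs to the graph of the generator of the semigroup `T`. -/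
def InGenerator (T : ℝ → E →L[ℝ] E) (f g : E) : Prop :=
  Tendsto (fun t : ℝ => t⁻¹ • (T t f - f)) (𝓝[>] (0 : ℝ)) (𝓝 g)

variable {Ω : Type*} [MeasurableSpace Ω]

/-- A function into a measurable space is *locally measurable* (w.r.t. `μ`) if on every set of
finite measure it coincides a.e. with a measurable function. -/
def LocallyMeasurable {α : Type*} [MeasurableSpace α] (μ : Measure Ω) (V : Ω → α) : Prop :=
  ∀ B : Set Ω, MeasurableSet B → μ B < ∞ →
    ∃ g : Ω → α, Measurable g ∧ ∀ᵐ ω ∂(μ.restrict B), V ω = g ω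

/-- A set is a local `μ`-null set if its intersection with every measurable set of finite
measure is null. -/
def IsLocalNullSet (μ : Measure Ω) (N : Set Ω) : Prop :=
  ∀ B : Set Ω, MeasurableSet B → μ B < ∞ → μ (N ∩ B) = 0

/-- Positivity of a family of operators on `L_p` (for positive times). -/
def IsPositiveSG {p : ℝ≥0∞} {μ : Measure Ω} [Fact (1 ≤ p)]
    (T : ℝ → Lp ℝ p μ →L[ℝ] Lp ℝ p μ) : Prop :=
  ∀ t : ℝ, 0 ≤ t → ∀ f : Lp ℝ p μ, 0 ≤ f → 0 ≤ T t f

/-- A band projection on the Banach lattice `L_p(μ)`: an idempotent operator `P`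
with `0 ≤ P f ≤ f` for all `f ≥ 0`. -/
def IsBandProjection {p : ℝ≥0∞} {μ : Measure Ω} [Fact (1 ≤ p)]
    (P : Lp ℝ p μ →L[ℝ] Lp ℝ p μ) : Prop :=
  P.comp P = P ∧ ∀ f : Lp ℝ p μ, 0 ≤ f → 0 ≤ P f ∧ P f ≤ f

/-- `S = (e^{t(A−W)})_{t ≥ 0}`: `S` is the `C₀`-semigroup whose generator is `A - W`,
where `A` is the generator of `T` and the bounded function `W` acts by multiplication. -/
def IsPerturbedSG (μ : Measure Ω) (p : ℝ≥0∞) [Fact (1 ≤ p)]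
    (T S : ℝ → Lp ℝ p μ →L[ℝ] Lp ℝ p μ) (W : Ω → ℝ) : Prop :=
  IsC0Semigroup S ∧
    ∀ f g : Lp ℝ p μ, InGenerator S f g ↔
      ∃ g₀ : Lp ℝ p μ, InGenerator T f g₀ ∧
        ⇑g =ᵐ[μ] fun ω => g₀ ω - W ω * f ω

/-- Same as `IsPerturbedSG`, for semigroups acting on a subspace `F` of `L_p(μ)`. -/
def IsPerturbedSGSub (μ : Measure Ω) (p : ℝ≥0∞) [Fact (1 ≤ p)] (F : Submodule ℝ (Lp ℝ p μ))
    (T S : ℝ → F →L[ℝ] F) (W : Ω → ℝ) : Prop :=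
  IsC0Semigroup S ∧
    ∀ f g : F, InGenerator S f g ↔
      ∃ g₀ : F, InGenerator T f g₀ ∧
        ⇑(g : Lp ℝ p μ) =ᵐ[μ] fun ω => (g₀ : Lp ℝ p μ) ω - W ω * (f : Lp ℝ p μ) ω

/-- The truncation `V ∧ n` of `V : Ω → [0,∞]`, as a real-valued function. -/
def trunc (V : Ω → ℝ≥0∞) (n : ℕ) : Ω → ℝ := fun ω => (min (V ω) (n : ℝ≥0∞)).toReal

/-- The scalar multiple `ε V` of an absorption rate `V : Ω → [0,∞]`. -/
def smulRate (ε : ℝ) (V : Ω → ℝ≥0∞) : Ω → ℝ≥0∞ := fun ω => ENNReal.ofReal ε * V ω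

/-- The absorption rate `V - V ∧ n` (with value `∞` wherever `V = ∞`). -/
def resid (V : Ω → ℝ≥0∞) (n : ℕ) : Ω → ℝ≥0∞ := fun ω => V ω - min (V ω) (n : ℝ≥0∞)

/-- `TV` is the absorption semigroup `T_V` associated with the rate `V : Ω → [0,∞]`, i.e.
the strong limit `T_V(t) = s-lim_{n→∞} e^{t(A - V∧n)}` (for `t ≥ 0`). -/
def IsAbsorptionSG (μ : Measure Ω) (p : ℝ≥0∞) [Fact (1 ≤ p)]
    (T : ℝ → Lp ℝ p μ →L[ℝ] Lp ℝ p μ) (V : Ω → ℝ≥0∞)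
    (TV : ℝ → Lp ℝ p μ →L[ℝ] Lp ℝ p μ) : Prop :=
  ∃ S : ℕ → ℝ → Lp ℝ p μ →L[ℝ] Lp ℝ p μ,
    (∀ n, IsPerturbedSG μ p T (S n) (trunc V n)) ∧
    ∀ t : ℝ, 0 ≤ t → ∀ f, Tendsto (fun n => S n t f) atTop (𝓝 (TV t f))

/-- `V : Ω → [0,∞]` is `T`-admissible: `V` is locally measurable, the strong limits
`T_V(t) = s-lim_{n→∞} e^{t(A - V∧n)}` exist, and `T_V` is a `C₀`-semigroup. -/
def Admissible (μ : Measure Ω) (p : ℝ≥0∞) [Fact (1 ≤ p)]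
    (T : ℝ → Lp ℝ p μ →L[ℝ] Lp ℝ p μ) (V : Ω → ℝ≥0∞) : Prop :=
  LocallyMeasurable μ V ∧
  ∃ TV, IsAbsorptionSG μ p T V TV ∧ IsC0Semigroup TV

/-- The truncation `(V ∧ n) ∨ (−n)` of an extended-real-valued rate, as a real function. -/
def truncE (V : Ω → EReal) (n : ℕ) : Ω → ℝ :=
  fun ω => (max (min (V ω) (n : EReal)) (-(n : EReal))).toReal

/-- `TV` is the absorption semigroup `T_V` of an extended-real-valued rate `V`:
`T_V(t) = s-lim_{n→∞} e^{t(A - (V∧n)∨(−n))}` (for `t ≥ 0`). -/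
def IsAbsorptionSGE (μ : Measure Ω) (p : ℝ≥0∞) [Fact (1 ≤ p)]
    (T : ℝ → Lp ℝ p μ →L[ℝ] Lp ℝ p μ) (V : Ω → EReal)
    (TV : ℝ → Lp ℝ p μ →L[ℝ] Lp ℝ p μ) : Prop :=
  ∃ S : ℕ → ℝ → Lp ℝ p μ →L[ℝ] Lp ℝ p μ,
    (∀ n, IsPerturbedSG μ p T (S n) (truncE V n)) ∧
    ∀ t : ℝ, 0 ≤ t → ∀ f, Tendsto (fun n => S n t f) atTop (𝓝 (TV t f))

/-- `T`-admissibility for an extended-real-valued absorption rate `V`. -/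
def AdmissibleE (μ : Measure Ω) (p : ℝ≥0∞) [Fact (1 ≤ p)]
    (T : ℝ → Lp ℝ p μ →L[ℝ] Lp ℝ p μ) (V : Ω → EReal) : Prop :=
  LocallyMeasurable μ V ∧
  ∃ TV, IsAbsorptionSGE μ p T V TV ∧ IsC0Semigroup TV

end Absorption

open Absorption

namespace Absorption

section gen
variable {E : Type*} [NormedAddCommGroup E] [NormedSpace ℝ E]

/-- generator of `Q` is generator of `P` plus `B`. -/
def Pert (P Q : ℝ → E →L[ℝ] E) (B : E →L[ℝ] E) : Prop :=
  ∀ f g : E, InGenerator Q f g ↔ InGenerator P f (g - B f)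

lemma Pert.trans {T P Q : ℝ → E →L[ℝ] E} {B C : E →L[ℝ] E} (h₁ : Pert T P B) (h₂ : Pert P Q C) :
    Pert T Q (B + C) := by
  intro f g
  rw [h₂, h₁]
  simp [sub_sub, add_comm]

lemma Pert.symm {P Q : ℝ → E →L[ℝ] E} {B : E →L[ℝ] E} (h₁ : Pert P Q B) : Pert Q P (-B) := by
  intro f g
  rw [h₁]
  simp

lemma gen_scale {P : ℝ → E →L[ℝ] E} (h0 : P 0 = ContinuousLinearMap.id ℝ E)
    (hc : ∀ f : E, ContinuousOn (fun t => P t f) (Set.Ici (0 : ℝ))) (c : ℝ) {f g : E}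
    (h : InGenerator P f g) : InGenerator (fun t => Real.exp (c * t) • P t) f (g + c • f) := by
  unfold InGenerator at *
  have h1 : Tendsto (fun t : ℝ => t⁻¹ * (Real.exp (c * t) - 1)) (𝓝[>] (0:ℝ)) (𝓝 c) := by
    have : HasDerivAt (fun t : ℝ => Real.exp (c * t)) c 0 := by
      have := ((hasDerivAt_id (0:ℝ)).const_mul c).exp
      simpa using this
    have := (hasDerivAt_iff_tendsto_slope_zero.1 this)
    refine (this.mono_left (nhdsWithin_mono _ ?_)).congr ?_
    · intro x hx; exact ne_of_gt hx
    · intro t; simp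
  have h2 : Tendsto (fun t : ℝ => P t f) (𝓝[>] (0:ℝ)) (𝓝 f) := by
    have := (hc f 0 (by simp)).mono_left (nhdsWithin_mono _ Set.Ioi_subset_Ici_self)
    simpa [h0] using this
  refine (h.add (h1.smul h2)).congr ?_
  intro t
  simp only [smul_apply, smul_sub, sub_smul, mul_smul, mul_sub, mul_one]
  abel

lemma c0_scale {P : ℝ → E →L[ℝ] E} (h : IsC0Semigroup P) (c : ℝ) :
    IsC0Semigroup (fun t => Real.exp (c * t) • P t) := by
  obtain ⟨⟨h0, hm⟩, hc⟩ := h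
  refine ⟨⟨by simp [h0], ?_⟩, ?_⟩
  · intro s t hs ht
    ext f
    simp [hm s t hs ht, mul_add, Real.exp_add, mul_smul]
    rw [smul_comm]
  · intro f
    have : ContinuousOn (fun t : ℝ => Real.exp (c * t)) (Set.Ici 0) := by fun_prop
    exact this.smul (hc f)

lemma pert_scale {P : ℝ → E →L[ℝ] E} (h : IsC0Semigroup P) (c : ℝ) :
    Pert P (fun t => Real.exp (c * t) • P t) (c • ContinuousLinearMap.id ℝ E) := by
  intro f g
  constructor
  · intro hg
    have := gen_scale (c0_scale h c).1.1 (c0_scale h c).2 (-c) hg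
    have e : (fun t : ℝ => Real.exp (-c * t) • (fun t => Real.exp (c * t) • P t) t) = P := by
      funext t
      simp only [smul_smul, ← Real.exp_add]
      simp
    rw [e] at this
    simpa [sub_eq_add_neg] using this
  · intro hg
    have := gen_scale h.1.1 h.2 c hg
    simpa using this

variable [CompleteSpace E]

lemma c0_bdd {P : ℝ → E →L[ℝ] E} (h : IsC0Semigroup P) (τ : ℝ) :
    ∃ M : ℝ, 0 ≤ M ∧ ∀ s, 0 ≤ s → s ≤ τ → ‖P s‖ ≤ M := by
  have : ∃ C', ∀ i : Set.Icc (0:ℝ) τ, ‖P i‖ ≤ C' := by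
    apply banach_steinhaus
    intro x
    have hc : ContinuousOn (fun t => P t x) (Set.Icc 0 τ) :=
      (h.2 x).mono Set.Icc_subset_Ici_self
    obtain ⟨C, hC⟩ := isCompact_Icc.exists_bound_of_continuousOn hc
    exact ⟨C, fun i => hC i i.2⟩
  obtain ⟨C, hC⟩ := this
  exact ⟨max C 0, le_max_right _ _, fun s h0 h1 => (hC ⟨s, h0, h1⟩).trans (le_max_left _ _)⟩

lemma c0_joint {P : ℝ → E →L[ℝ] E} (h : IsC0Semigroup P) {ι : Type*} {l : Filter ι}
    {r : ι → ℝ} {x : ι → E} {r₀ : ℝ} {x₀ : E} (hr : Tendsto r l (𝓝 r₀)) (hr0 : ∀ᶠ i in l, 0 ≤ r i)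
    (h₀ : 0 ≤ r₀) (hx : Tendsto x l (𝓝 x₀)) :
    Tendsto (fun i => P (r i) (x i)) l (𝓝 (P r₀ x₀)) := by
  obtain ⟨M, hM0, hM⟩ := c0_bdd h (r₀ + 1)
  have h1 : Tendsto (fun i => P (r i) x₀) l (𝓝 (P r₀ x₀)) :=
    (h.2 x₀ r₀ h₀).tendsto.comp (tendsto_nhdsWithin_iff.2 ⟨hr, hr0⟩)
  have h2 : Tendsto (fun i => P (r i) (x i - x₀)) l (𝓝 0) := by
    have h3 : Tendsto (fun i => M * ‖x i - x₀‖) l (𝓝 0) := by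
      have := ((hx.sub_const x₀).norm).const_mul M
      simpa using this
    refine squeeze_zero_norm' ?_ h3
    filter_upwards [hr0, hr.eventually (eventually_le_nhds (lt_add_one r₀))] with i h1 h2
    exact (P (r i)).le_of_opNorm_le (hM _ h1 h2) _
  have := h1.add h2
  simpa using this

lemma c0_cont {P : ℝ → E →L[ℝ] E} (hP : IsC0Semigroup P) (t : ℝ) {v : ℝ → E}
    (hv : ContinuousOn v (Set.Icc 0 t)) :
    ContinuousOn (fun s => P (t - s) (v s)) (Set.Icc 0 t) := by
  intro s hs
  refine c0_joint hP ?_ ?_ (by linarith [hs.2]) (hv s hs)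
  · exact (tendsto_const_nhds.sub tendsto_id).mono_left nhdsWithin_le_nhds
  · filter_upwards [self_mem_nhdsWithin] with i hi
    linarith [hi.2]

lemma duhamel {P Q : ℝ → E →L[ℝ] E} {B : E →L[ℝ] E} (hP : IsC0Semigroup P) (hQ : IsC0Semigroup Q)
    (hB : Pert P Q B) {f g : E} (hf : InGenerator Q f g) {t : ℝ} (ht : 0 ≤ t) :
    ∫ s in (0:ℝ)..t, P (t - s) (B (Q s f)) = Q t f - P t f := by
  have hv : ContinuousOn (fun s => Q s f) (Set.Icc 0 t) :=
    (hQ.2 f).mono Set.Icc_subset_Ici_self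
  have h1 := c0_cont hP t hv
  have h2 := c0_cont hP t (B.continuous.comp_continuousOn hv)
  have := intervalIntegral.integral_eq_sub_of_hasDeriv_right_of_le ht h1
    (f' := fun s => P (t - s) (B (Q s f))) ?_ ?_
  · rw [this]; simp [hQ.1.1, hP.1.1]
  · intro s hs
    rw [hasDerivWithinAt_iff_tendsto_slope' (by simp)]
    have hQs : InGenerator Q (Q s f) (Q s g) := by
      have := ((Q s).continuous.tendsto g).comp hf
      refine this.congr' ?_
      filter_upwards [self_mem_nhdsWithin] with r hr
      have e : Q r (Q s f) = Q s (Q r f) := by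
        have e1 := hQ.1.2 r s (le_of_lt hr) hs.1.le
        have e2 := hQ.1.2 s r hs.1.le (le_of_lt hr)
        rw [add_comm, e2] at e1
        exact (DFunLike.congr_fun e1 f).symm
      simp [e]
    have hPs := (hB _ _).1 hQs
    have key : Tendsto (fun r : ℝ => r⁻¹ • (Q r (Q s f) - P r (Q s f))) (𝓝[>] 0)
        (𝓝 (B (Q s f))) := by
      have h3 : Q s g - (Q s g - B (Q s f)) = B (Q s f) := by abel
      have := Tendsto.sub (G := E) hQs hPs
      rw [h3] at this
      refine this.congr ?_
      intro r
      rw [← smul_sub]; congr 1; abel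
    have hsub : Tendsto (fun y : ℝ => y - s) (𝓝[>] s) (𝓝[>] 0) := by
      refine tendsto_nhdsWithin_iff.2 ⟨?_, ?_⟩
      · have : Tendsto (fun y : ℝ => y - s) (𝓝 s) (𝓝 (s - s)) := tendsto_id.sub_const s
        rw [sub_self] at this
        exact this.mono_left nhdsWithin_le_nhds
      · filter_upwards [self_mem_nhdsWithin] with y hy
        exact sub_pos.2 (Set.mem_Ioi.1 hy)
    have hlt : ∀ᶠ y in 𝓝[>] s, y ≤ t := 
      (eventually_le_nhds hs.2).filter_mono nhdsWithin_le_nhds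
    have fin := c0_joint hP (l := 𝓝[>] s) (r := fun y => t - y) (r₀ := t - s)
      ((tendsto_const_nhds.sub tendsto_id).mono_left nhdsWithin_le_nhds)
      (hlt.mono fun y hy => by linarith) (by linarith [hs.2]) (key.comp hsub)
    refine fin.congr' ?_
    filter_upwards [hlt, self_mem_nhdsWithin] with y hy hys
    have hys : s < y := hys
    have e1 : Q y f = Q (y - s) (Q s f) := by
      have := hQ.1.2 (y - s) s (by linarith) hs.1.le
      rw [sub_add_cancel] at this
      rw [this]; rfl
    have e2 : P (t - s) = (P (t - y)).comp (P (y - s)) := by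
      rw [← hP.1.2 _ _ (by linarith) (by linarith)]; congr 1; ring
    simp [slope, e1, e2]
  · exact (h2.intervalIntegrable_of_Icc ht)

lemma mean_gen {P : ℝ → E →L[ℝ] E} (hP : IsC0Semigroup P) (f : E) {h : ℝ} (hh : 0 < h) :
    InGenerator P (∫ s in (0:ℝ)..h, P s f) (P h f - f) := by
  set u : ℝ → E := fun s => P (max s 0) f with hu
  have huc : Continuous u := by
    rw [← continuousOn_univ]
    exact (hP.2 f).comp (by fun_prop) (fun x _ => Set.mem_Ici.2 (le_max_right _ _))
  have hint : ∀ a b, 0 ≤ a → 0 ≤ b → ∫ s in a..b, P s f = ∫ s in a..b, u s := by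
    intro a b ha hb
    refine intervalIntegral.integral_congr fun s hs => ?_
    have : 0 ≤ s := (le_min ha hb).trans hs.1
    simp [hu, this]
  have hi : ∀ a b, IntervalIntegrable u volume a b := fun a b => huc.intervalIntegrable _ _
  have hd : ∀ a : ℝ, 0 ≤ a → Tendsto (fun r : ℝ => r⁻¹ • ∫ s in a..(a+r), u s) (𝓝[>] 0)
      (𝓝 (P a f)) := by
    intro a ha
    have h1 : HasDerivAt (fun r => ∫ s in a..r, u s) (u a) a :=
      intervalIntegral.integral_hasDerivAt_right (hi _ _)
        (huc.stronglyMeasurableAtFilter _ _) huc.continuousAt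
    have := hasDerivAt_iff_tendsto_slope_zero.1 h1
    simp only [intervalIntegral.integral_same, sub_zero] at this
    have e : u a = P a f := by simp [hu, ha]
    rw [e] at this
    exact this.mono_left (nhdsWithin_mono _ (fun x hx => ne_of_gt hx))
  have h0 := hd 0 le_rfl
  rw [hP.1.1] at h0
  refine ((hd h hh.le).sub h0).congr' ?_
  filter_upwards [self_mem_nhdsWithin] with r hr
  have hr : 0 < r := hr
  rw [← smul_sub]
  congr 1
  have e1 : P r (∫ s in (0:ℝ)..h, P s f) = ∫ s in r..(h + r), u s := by
    have : ∫ s in r..(h + r), u s = ∫ s in (0:ℝ)..h, u (s + r) := by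
      rw [intervalIntegral.integral_comp_add_right]; simp
    rw [this, hint _ _ le_rfl hh.le, ← ContinuousLinearMap.intervalIntegral_comp_comm _ (hi _ _)]
    refine intervalIntegral.integral_congr fun s hs => ?_
    rw [Set.uIcc_of_le hh.le] at hs
    have h1 : max s 0 = s := max_eq_left hs.1
    have h2 : max (s + r) 0 = r + s := by rw [max_eq_left (by linarith [hs.1]), add_comm]
    simp only [hu, h1, h2]
    rw [hP.1.2 r s hr.le hs.1]; rfl
  rw [e1, hint _ _ le_rfl hh.le, zero_add]
  rw [← intervalIntegral.integral_interval_sub_interval_comm' (hi _ _) (hi _ _) (hi _ _)]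

lemma mean_tendsto {P : ℝ → E →L[ℝ] E} (hP : IsC0Semigroup P) (f : E) :
    Tendsto (fun h : ℝ => h⁻¹ • ∫ s in (0:ℝ)..h, P s f) (𝓝[>] 0) (𝓝 f) := by
  set u : ℝ → E := fun s => P (max s 0) f with hu
  have huc : Continuous u := by
    rw [← continuousOn_univ]
    exact (hP.2 f).comp (by fun_prop) (fun x _ => Set.mem_Ici.2 (le_max_right _ _))
  have h1 : HasDerivAt (fun r => ∫ s in (0:ℝ)..r, u s) (u 0) 0 :=
    intervalIntegral.integral_hasDerivAt_right (huc.intervalIntegrable _ _)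
      (huc.stronglyMeasurableAtFilter _ _) huc.continuousAt
  have := hasDerivAt_iff_tendsto_slope_zero.1 h1
  have e : u 0 = f := by simp [hu, hP.1.1]
  rw [e] at this
  simp only [intervalIntegral.integral_same, sub_zero, zero_add] at this
  refine (this.mono_left (nhdsWithin_mono _ (fun x hx => ne_of_gt hx))).congr' ?_
  filter_upwards [self_mem_nhdsWithin] with r hr
  congr 1
  refine intervalIntegral.integral_congr fun s hs => ?_
  rw [Set.uIcc_of_le (le_of_lt hr)] at hs
  simp [hu, hs.1]

end gen

section order
set_option linter.unusedSectionVars false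
variable {E : Type*} [NormedAddCommGroup E] [NormedSpace ℝ E] [CompleteSpace E]
  [Lattice E] [HasSolidNorm E] [IsOrderedAddMonoid E] [IsOrderedModule ℝ E]

lemma ii_nonneg {t : ℝ} (ht : 0 ≤ t) {v : ℝ → E} (h : ∀ s, 0 ≤ s → s ≤ t → 0 ≤ v s) :
    0 ≤ ∫ s in (0:ℝ)..t, v s := by
  rw [intervalIntegral.integral_of_le ht]
  refine integral_nonneg_of_ae ?_
  filter_upwards [ae_restrict_mem measurableSet_Ioc] with s hs
  exact h s hs.1.le hs.2

lemma pos_on_dom {P Q : ℝ → E →L[ℝ] E} {B : E →L[ℝ] E} (hP : IsC0Semigroup P)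
    (hQ : IsC0Semigroup Q) (hB : Pert P Q B) (hPp : ∀ t, 0 ≤ t → ∀ f, 0 ≤ f → 0 ≤ P t f)
    (hBp : ∀ f, 0 ≤ f → 0 ≤ B f) {f g : E} (hf : InGenerator Q f g) (hf0 : 0 ≤ f)
    {τ : ℝ} (hτ : 0 ≤ τ) : 0 ≤ Q τ f := by
  obtain ⟨M, hM0, hM⟩ := c0_bdd hP τ
  set u : ℝ → E := fun s => Q (max s 0) f with hu
  have huc : Continuous u := by
    rw [← continuousOn_univ]
    exact (hQ.2 f).comp (by fun_prop) (fun x _ => Set.mem_Ici.2 (le_max_right _ _))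
  have hum : Continuous (fun s => (u s)⁻) := by
    simp only [negPart_def]
    exact (huc.neg).sup continuous_const
  set K := M * ‖B‖ with hK
  set F : ℝ → ℝ := fun t => ∫ s in (0:ℝ)..t, ‖(u s)⁻‖ with hF
  have hFd : ∀ t, HasDerivAt F ‖(u t)⁻‖ t := fun t =>
    intervalIntegral.integral_hasDerivAt_right (hum.norm.intervalIntegrable _ _)
      (hum.norm.stronglyMeasurableAtFilter _ _) hum.norm.continuousAt
  have hbound : ∀ t ∈ Set.Icc 0 τ, ‖(u t)⁻‖ ≤ K * ‖F t‖ := by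
    intro t ht
    have hd := duhamel hP hQ hB hf ht.1
    have hc1 : ContinuousOn (fun s => P (t - s) (B (Q s f))) (Set.Icc 0 t) :=
      c0_cont hP t (B.continuous.comp_continuousOn ((hQ.2 f).mono Set.Icc_subset_Ici_self))
    have hc2 : ContinuousOn (fun s => P (t - s) (B ((u s)⁻))) (Set.Icc 0 t) :=
      c0_cont hP t (B.continuous.comp_continuousOn hum.continuousOn)
    set J := ∫ s in (0:ℝ)..t, P (t - s) (B ((u s)⁻)) with hJ
    have hJ0 : 0 ≤ J := ii_nonneg ht.1 fun s h0 h1 =>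
      hPp _ (by linarith) _ (hBp _ (negPart_nonneg _))
    have hsum : 0 ≤ (∫ s in (0:ℝ)..t, P (t - s) (B (Q s f))) + J := by
      rw [hJ, ← intervalIntegral.integral_add (hc1.intervalIntegrable_of_Icc ht.1)
        (hc2.intervalIntegrable_of_Icc ht.1)]
      refine ii_nonneg ht.1 fun s h0 h1 => ?_
      rw [← map_add, ← map_add]
      refine hPp _ (by linarith) _ (hBp _ ?_)
      have : u s = Q s f := by simp [hu, h0]
      rw [this]
      have h4 := posPart_sub_negPart (Q s f)
      have h5 := posPart_nonneg (Q s f)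
      rwa [eq_add_of_sub_eq h4] at h5
    have hle : (u t)⁻ ≤ J := by
      have e : u t = Q t f := by simp [hu, ht.1]
      rw [negPart_def]
      refine sup_le ?_ hJ0
      rw [e, neg_le_iff_add_nonneg']
      rw [hd] at hsum
      have := add_nonneg hsum (hPp t ht.1 f hf0)
      convert this using 1
      abel
    have hn : ‖(u t)⁻‖ ≤ ‖J‖ := by
      apply norm_le_norm_of_abs_le_abs
      rwa [abs_of_nonneg (negPart_nonneg _), abs_of_nonneg hJ0]
    refine hn.trans ?_
    have hF0 : 0 ≤ F t := intervalIntegral.integral_nonneg ht.1 fun s _ => norm_nonneg _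
    rw [Real.norm_of_nonneg hF0, hF]
    simp only
    rw [← intervalIntegral.integral_const_mul]
    refine intervalIntegral.norm_integral_le_of_norm_le ht.1 ?_
      ((hum.norm.const_mul K).intervalIntegrable _ _)
    refine Filter.Eventually.of_forall fun s hs => ?_
    rw [hK, mul_assoc]
    refine ((P (t-s)).le_of_opNorm_le (hM _ (by linarith [hs.2]) (by linarith [hs.1, ht.2])) _).trans ?_
    exact mul_le_mul_of_nonneg_left (B.le_opNorm _) hM0
  have hG := norm_le_gronwallBound_of_norm_deriv_right_le (f := F) (f' := fun t => ‖(u t)⁻‖)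
    (δ := 0) (K := K) (ε := 0) (a := 0) (b := τ)
    (fun t _ => (hFd t).continuousAt.continuousWithinAt)
    (fun t _ => (hFd t).hasDerivWithinAt) (by simp [hF])
    (fun t ht => by simpa using hbound t ⟨ht.1, ht.2.le⟩) τ ⟨hτ, le_rfl⟩
  have hFτ : ‖F τ‖ = 0 := le_antisymm (by simpa [gronwallBound_ε0] using hG) (norm_nonneg _)
  have := hbound τ ⟨hτ, le_rfl⟩
  rw [hFτ, mul_zero] at this
  have h0 : (u τ)⁻ = 0 := norm_le_zero_iff.1 this
  rw [negPart_eq_zero] at h0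
  simpa [hu, hτ] using h0

lemma approx_dom {P : ℝ → E →L[ℝ] E} (hP : IsC0Semigroup P)
    (hPp : ∀ t, 0 ≤ t → ∀ f, 0 ≤ f → 0 ≤ P t f) {f : E} (hf : 0 ≤ f) :
    f ∈ closure {v : E | 0 ≤ v ∧ ∃ g, InGenerator P v g} := by
  refine mem_closure_of_tendsto (mean_tendsto hP f) ?_
  filter_upwards [self_mem_nhdsWithin] with h hh
  have hh : 0 < h := hh
  refine ⟨smul_nonneg (inv_nonneg.2 hh.le) (ii_nonneg hh.le fun s h0 _ => hPp s h0 f hf),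
    h⁻¹ • (P h f - f), ?_⟩
  have := (mean_gen hP f hh).const_smul h⁻¹
  refine this.congr fun r => ?_
  rw [map_smul, ← smul_sub, smul_comm]

lemma pos_all {P Q : ℝ → E →L[ℝ] E} {B : E →L[ℝ] E} (hP : IsC0Semigroup P)
    (hQ : IsC0Semigroup Q) (hB : Pert P Q B) (hPp : ∀ t, 0 ≤ t → ∀ f, 0 ≤ f → 0 ≤ P t f)
    (hBp : ∀ f, 0 ≤ f → 0 ≤ B f) : ∀ t, 0 ≤ t → ∀ f, 0 ≤ f → 0 ≤ Q t f := by
  intro t ht f hf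
  have hcl : IsClosed {v : E | 0 ≤ Q t v} := isClosed_le continuous_const (Q t).continuous
  refine closure_minimal ?_ hcl (approx_dom hP hPp hf)
  rintro v ⟨hv, g, hg⟩
  have : InGenerator Q v (g + B v) := (hB _ _).2 (by simpa using hg)
  exact pos_on_dom hP hQ hB hPp hBp this hv ht

lemma le_all {P Q : ℝ → E →L[ℝ] E} {B : E →L[ℝ] E} (hP : IsC0Semigroup P)
    (hQ : IsC0Semigroup Q) (hB : Pert P Q B) (hPp : ∀ t, 0 ≤ t → ∀ f, 0 ≤ f → 0 ≤ P t f)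
    (hBp : ∀ f, 0 ≤ f → 0 ≤ B f) : ∀ t, 0 ≤ t → ∀ f, 0 ≤ f → P t f ≤ Q t f := by
  intro t ht f hf
  have hcl : IsClosed {v : E | P t v ≤ Q t v} := isClosed_le (P t).continuous (Q t).continuous
  refine closure_minimal ?_ hcl (approx_dom hP hPp hf)
  rintro v ⟨hv, g, hg⟩
  have : InGenerator Q v (g + B v) := (hB _ _).2 (by simpa using hg)
  have hd := duhamel hP hQ hB this ht
  refine sub_nonneg.1 (hd ▸ ii_nonneg ht fun s h0 h1 => ?_)
  exact hPp _ (by linarith) _ (hBp _ (pos_all hP hQ hB hPp hBp s h0 v hv))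

end order


section lp
variable {Ω : Type*} [MeasurableSpace Ω] {μ : Measure Ω} {p : ℝ≥0∞} [Fact (1 ≤ p)]

lemma lp_ordMod : IsOrderedModule ℝ (Lp ℝ p μ) := by
  refine IsOrderedModule.of_smul_nonneg ?_
  intro a ha f hf
  rw [← Lp.coeFn_nonneg] at hf ⊢
  filter_upwards [hf, Lp.coeFn_smul a f] with ω h1 h2
  rw [h2]
  exact mul_nonneg ha h1

lemma aesm_mul (hp : p ≠ ∞) {V : Ω → ℝ≥0∞} (hV : LocallyMeasurable μ V) {φ : ℝ≥0∞ → ℝ}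
    (hφ : Measurable φ) (f : Lp ℝ p μ) : AEStronglyMeasurable (fun ω => φ (V ω) * f ω) μ := by
  have hp0 : p ≠ 0 := (lt_of_lt_of_le one_pos (Fact.out : 1 ≤ p)).ne'
  obtain ⟨t, ht, hft, hσ⟩ := (Lp.finStronglyMeasurable f hp0 hp).exists_set_sigmaFinite
  have h1 : AEMeasurable V (μ.restrict t) := by
    have hu : (⋃ i, (spanningSets (μ.restrict t) i ∩ t)) = t := by
      rw [← Set.iUnion_inter, iUnion_spanningSets, Set.univ_inter]
    rw [← hu, aemeasurable_iUnion_iff]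
    intro i
    have hm := measurableSet_spanningSets (μ.restrict t) i
    have hfin := measure_spanningSets_lt_top (μ.restrict t) i
    rw [Measure.restrict_apply hm] at hfin
    obtain ⟨g, hg, he⟩ := hV _ (hm.inter ht) hfin
    exact ⟨g, hg, he⟩
  have h2 : AEMeasurable (fun ω => t.indicator (fun ω => φ (V ω)) ω) μ :=
    (aemeasurable_indicator_iff ht).2 (hφ.comp_aemeasurable h1)
  have h3 : (fun ω => φ (V ω) * f ω) = fun ω => t.indicator (fun ω => φ (V ω)) ω * f ω := by
    funext ω
    by_cases h : ω ∈ t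
    · simp [h]
    · simp [hft ω h]
  rw [h3]
  exact h2.aestronglyMeasurable.mul (Lp.aestronglyMeasurable f)

lemma exists_mul (hp : p ≠ ∞) {V : Ω → ℝ≥0∞} (hV : LocallyMeasurable μ V) {φ : ℝ≥0∞ → ℝ}
    (hφ : Measurable φ) {C : ℝ} (hC : ∀ x, |φ x| ≤ C) :
    ∃ B : Lp ℝ p μ →L[ℝ] Lp ℝ p μ, ∀ f, ⇑(B f) =ᵐ[μ] fun ω => φ (V ω) * f ω := by
  have hm : ∀ f : Lp ℝ p μ, MemLp (fun ω => φ (V ω) * f ω) p μ := fun f =>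
    (Lp.memLp f).of_le_mul (c := C) (aesm_mul hp hV hφ f) (Eventually.of_forall fun ω => by
      rw [norm_mul]; exact mul_le_mul_of_nonneg_right (hC _) (norm_nonneg _))
  let L : Lp ℝ p μ →ₗ[ℝ] Lp ℝ p μ :=
    { toFun := fun f => (hm f).toLp _
      map_add' := fun f g => by
        refine Lp.ext ?_
        filter_upwards [(hm f).coeFn_toLp, (hm g).coeFn_toLp, (hm (f+g)).coeFn_toLp,
          Lp.coeFn_add f g, Lp.coeFn_add ((hm f).toLp _) ((hm g).toLp _)] with ω h1 h2 h3 h4 h5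
        rw [h3, h5, h4, Pi.add_apply, Pi.add_apply, h1, h2, mul_add]
      map_smul' := fun c f => by
        refine Lp.ext ?_
        filter_upwards [(hm f).coeFn_toLp, (hm (c • f)).coeFn_toLp,
          Lp.coeFn_smul c f, Lp.coeFn_smul c ((hm f).toLp _)] with ω h1 h3 h4 h5
        simp only [RingHom.id_apply]
        rw [h3, h5, h4, Pi.smul_apply, Pi.smul_apply, h1, smul_eq_mul, smul_eq_mul]
        ring }
  refine ⟨L.mkContinuous C fun f => ?_, fun f => (hm f).coeFn_toLp⟩
  refine Lp.norm_le_mul_norm_of_ae_le_mul ?_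
  filter_upwards [(hm f).coeFn_toLp] with ω h1
  change ‖((hm f).toLp _ : Lp ℝ p μ) ω‖ ≤ _
  rw [h1, norm_mul]; exact mul_le_mul_of_nonneg_right (hC _) (norm_nonneg _)

lemma pert_of {T S : ℝ → Lp ℝ p μ →L[ℝ] Lp ℝ p μ} {W : Ω → ℝ} (h : IsPerturbedSG μ p T S W)
    {B : Lp ℝ p μ →L[ℝ] Lp ℝ p μ} (hB : ∀ f, ⇑(B f) =ᵐ[μ] fun ω => W ω * f ω) :
    Pert T S (-B) := by
  intro f g
  rw [h.2]
  have key : ∀ g₀ : Lp ℝ p μ, (⇑g =ᵐ[μ] fun ω => g₀ ω - W ω * f ω) ↔ g₀ = g - (-B) f := by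
    intro g₀
    have e : g₀ = g - (-B) f ↔ g = g₀ - B f := by
      simp only [neg_apply, sub_neg_eq_add]
      exact (eq_sub_iff_add_eq.trans eq_comm).symm
    rw [e, Lp.ext_iff]
    have h1 : ⇑(g₀ - B f) =ᵐ[μ] fun ω => g₀ ω - W ω * f ω := by
      filter_upwards [Lp.coeFn_sub g₀ (B f), hB f] with ω h1 h2
      rw [h1, Pi.sub_apply, h2]
    exact ⟨fun h => h.trans h1.symm, fun h => h.trans h1⟩
  simp only [key]
  constructor
  · rintro ⟨g₀, h1, rfl⟩; exact h1
  · intro h1; exact ⟨_, h1, rfl⟩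

lemma compare (hp : p ≠ ∞) {T S₁ S₂ : ℝ → Lp ℝ p μ →L[ℝ] Lp ℝ p μ}
    (hT : IsC0Semigroup T) (hTpos : IsPositiveSG T) {V : Ω → ℝ≥0∞} (hV : LocallyMeasurable μ V)
    {φ₁ φ₂ : ℝ≥0∞ → ℝ} (h₁ : Measurable φ₁) (h₂ : Measurable φ₂) {C a : ℝ}
    (hC₁ : ∀ x, |φ₁ x| ≤ C) (hC₂ : ∀ x, |φ₂ x| ≤ C) (hle : ∀ x, φ₁ x ≤ a + φ₂ x)
    (hS₁ : IsPerturbedSG μ p T S₁ (fun ω => φ₁ (V ω)))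
    (hS₂ : IsPerturbedSG μ p T S₂ (fun ω => φ₂ (V ω)))
    {t : ℝ} (ht : 0 ≤ t) {f : Lp ℝ p μ} (hf : 0 ≤ f) :
    Real.exp (-a * t) • S₂ t f ≤ S₁ t f := by
  haveI : IsOrderedModule ℝ (Lp ℝ p μ) := lp_ordMod
  obtain ⟨M₁, hM₁⟩ := exists_mul hp hV h₁ hC₁
  obtain ⟨M₂, hM₂⟩ := exists_mul hp hV h₂ hC₂
  have p₁ := pert_of hS₁ hM₁
  have p₂ := pert_of hS₂ hM₂
  have q₂ := p₂.trans (pert_scale hS₂.1 (-a))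
  have q₀ := pert_scale hT (-(C + a))
  have c₀ := c0_scale hT (-(C + a))
  have c₂ := c0_scale hS₂.1 (-a)
  have pos₂ := pos_all c₀ c₂ (q₀.symm.trans q₂) (fun t ht f hf => by
      exact smul_nonneg (Real.exp_pos _).le (hTpos t ht f hf)) (fun f hf => by
      have e : (-(-(C + a) • ContinuousLinearMap.id ℝ (Lp ℝ p μ)) +
        (-M₂ + -a • ContinuousLinearMap.id ℝ (Lp ℝ p μ))) f = C • f - M₂ f := by
        simp [add_smul]; abel
      rw [e, ← Lp.coeFn_nonneg]
      rw [← Lp.coeFn_nonneg] at hf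
      filter_upwards [hf, hM₂ f, Lp.coeFn_sub (C • f) (M₂ f), Lp.coeFn_smul C f] with ω a1 a2 a3 a4
      rw [a3, Pi.sub_apply, a2, a4, Pi.smul_apply, smul_eq_mul, ← sub_mul]
      exact mul_nonneg (sub_nonneg.2 ((le_abs_self _).trans (hC₂ _))) a1)
  refine le_all c₂ hS₁.1 (q₂.symm.trans p₁) pos₂ (fun f hf => ?_) t ht f hf
  have e : (-(-M₂ + -a • ContinuousLinearMap.id ℝ (Lp ℝ p μ)) + -M₁) f
      = (a • f + M₂ f) - M₁ f := by
    simp; abel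
  rw [e, ← Lp.coeFn_nonneg]
  rw [← Lp.coeFn_nonneg] at hf
  filter_upwards [hf, hM₂ f, hM₁ f, Lp.coeFn_sub (a • f + M₂ f) (M₁ f),
    Lp.coeFn_add (a • f) (M₂ f), Lp.coeFn_smul a f] with ω a1 a2 a3 a4 a5 a6
  rw [a4, Pi.sub_apply, a5, Pi.add_apply, a2, a3, a6, Pi.smul_apply, smul_eq_mul, ← add_mul,
    ← sub_mul]
  exact mul_nonneg (sub_nonneg.2 (hle _)) a1

lemma rate_ineq {ε : ℝ} (h0 : 0 < ε) (h1 : ε ≤ 1) (n m : ℕ) (x : ℝ≥0∞) :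
    (min (ENNReal.ofReal ε * x) (m : ℝ≥0∞)).toReal
      ≤ ε * n + (min (x - min x (n : ℝ≥0∞)) (m : ℝ≥0∞)).toReal := by
  have key : min (ENNReal.ofReal ε * x) (m : ℝ≥0∞)
      ≤ ENNReal.ofReal (ε * n) + min (x - min x (n : ℝ≥0∞)) (m : ℝ≥0∞) := by
    rw [← min_add_add_left]
    refine min_le_min ?_ le_add_self
    have h2 : x ≤ n + (x - min x (n : ℝ≥0∞)) := by
      conv_lhs => rw [← add_tsub_cancel_of_le (min_le_left x (n : ℝ≥0∞))]
      gcongr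
      exact min_le_right _ _
    calc ENNReal.ofReal ε * x ≤ ENNReal.ofReal ε * (n + (x - min x (n : ℝ≥0∞))) := by gcongr
      _ = ENNReal.ofReal (ε * n) + ENNReal.ofReal ε * (x - min x (n : ℝ≥0∞)) := by
        rw [mul_add, ENNReal.ofReal_mul h0.le, ENNReal.ofReal_natCast]
      _ ≤ _ := by
        gcongr
        exact mul_le_of_le_one_left' (by simpa using h1)
  have hfin : min (x - min x (n : ℝ≥0∞)) (m : ℝ≥0∞) ≠ ∞ :=
    ne_top_of_le_ne_top (ENNReal.natCast_ne_top m) (min_le_right _ _)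
  have := ENNReal.toReal_mono (by simp [hfin]) key
  rwa [ENNReal.toReal_add ENNReal.ofReal_ne_top hfin, ENNReal.toReal_ofReal (by positivity)] at this

lemma trunc_bd (x : ℝ≥0∞) (m : ℕ) : |(min x (m : ℝ≥0∞)).toReal| ≤ m := by
  rw [abs_of_nonneg ENNReal.toReal_nonneg]
  have := ENNReal.toReal_mono (ENNReal.natCast_ne_top m) (min_le_right x (m : ℝ≥0∞))
  simpa using this

end lp

end Absorption

/-- For `T`-admissible `V`: `T_{εV}(t) ≥ e^{−εnt} T_{V−V∧n}(t)` for all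
`ε ∈ (0,1]`, `n ∈ ℕ`, `t ≥ 0`, and consequently `T_{0,V} ≥ (T_V)_{−V}`. -/
theorem statement3
    {Ω : Type*} [MeasurableSpace Ω] (μ : Measure Ω) (p : ℝ≥0∞) [Fact (1 ≤ p)] (hp : p ≠ ∞)
    (T : ℝ → Lp ℝ p μ →L[ℝ] Lp ℝ p μ)
    (hT : IsC0Semigroup T) (hTpos : IsPositiveSG T)
    (V : Ω → ℝ≥0∞) (hV : Admissible μ p T V)
    -- the absorption semigroups `T_{εV}` for `ε ∈ (0,1]`
    (Sε : ℝ → ℝ → Lp ℝ p μ →L[ℝ] Lp ℝ p μ)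
    (hSε : ∀ ε : ℝ, 0 < ε → ε ≤ 1 → IsAbsorptionSG μ p T (smulRate ε V) (Sε ε))
    -- the absorption semigroups `T_{V − V∧n}`
    (R : ℕ → ℝ → Lp ℝ p μ →L[ℝ] Lp ℝ p μ)
    (hR : ∀ n : ℕ, IsAbsorptionSG μ p T (resid V n) (R n))
    -- `T_{0,V} = s-lim_{ε→0+} T_{εV}` and `(T_V)_{−V} = s-lim_{n→∞} T_{V−V∧n}`
    (L₁ L₂ : ℝ → Lp ℝ p μ →L[ℝ] Lp ℝ p μ)
    (hL₁ : ∀ t : ℝ, 0 ≤ t → ∀ f : Lp ℝ p μ,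
      Tendsto (fun ε : ℝ => Sε ε t f) (𝓝[>] (0 : ℝ)) (𝓝 (L₁ t f)))
    (hL₂ : ∀ t : ℝ, 0 ≤ t → ∀ f : Lp ℝ p μ,
      Tendsto (fun n : ℕ => R n t f) atTop (𝓝 (L₂ t f))) :
    (∀ ε : ℝ, 0 < ε → ε ≤ 1 → ∀ n : ℕ, ∀ t : ℝ, 0 ≤ t → ∀ f : Lp ℝ p μ, 0 ≤ f →
        Real.exp (-(ε * n * t)) • R n t f ≤ Sε ε t f) ∧
    (∀ t : ℝ, 0 ≤ t → ∀ f : Lp ℝ p μ, 0 ≤ f → L₂ t f ≤ L₁ t f) := by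
  have part1 : ∀ ε : ℝ, 0 < ε → ε ≤ 1 → ∀ n : ℕ, ∀ t : ℝ, 0 ≤ t → ∀ f : Lp ℝ p μ, 0 ≤ f →
        Real.exp (-(ε * n * t)) • R n t f ≤ Sε ε t f := by
    intro ε h0 h1 n t ht f hf
    obtain ⟨S₁, hS₁, hl₁⟩ := hSε ε h0 h1
    obtain ⟨S₂, hS₂, hl₂⟩ := hR n
    refine le_of_tendsto_of_tendsto' ((hl₂ t ht f).const_smul _) (hl₁ t ht f) fun m => ?_
    have := compare (S₁ := S₁ m) (S₂ := S₂ m) hp hT hTpos hV.1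
      (φ₁ := fun x => (min (ENNReal.ofReal ε * x) (m : ℝ≥0∞)).toReal)
      (φ₂ := fun x => (min (x - min x (n : ℝ≥0∞)) (m : ℝ≥0∞)).toReal)
      (by fun_prop) (by fun_prop) (fun x => trunc_bd _ m) (fun x => trunc_bd _ m)
      (fun x => rate_ineq h0 h1 n m x) (hS₁ m) (hS₂ m) ht hf
    rwa [neg_mul] at this
  refine ⟨part1, fun t ht f hf => ?_⟩
  refine le_of_tendsto' (hL₂ t ht f) fun n => ?_
  have hexp : Tendsto (fun ε : ℝ => Real.exp (-(ε * n * t)) • R n t f) (𝓝[>] 0) (𝓝 (R n t f)) := by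
    have hc : Continuous (fun ε : ℝ => Real.exp (-(ε * n * t)) • R n t f) := by fun_prop
    have := hc.tendsto 0
    simp only [zero_mul, neg_zero, Real.exp_zero, one_smul] at this
    exact this.mono_left nhdsWithin_le_nhds
  refine le_of_tendsto_of_tendsto hexp (hL₁ t ht f) ?_
  filter_upwards [self_mem_nhdsWithin,
    (eventually_le_nhds (zero_lt_one' ℝ)).filter_mono nhdsWithin_le_nhds] with ε h0 h1
  exact part1 ε h0 h1 n t ht f hf
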